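/- For every integer ℓ ≥ 2, as u → ∞, the inverse function satisfies (Z_ℓ^{[ℓ]})^{−1}(u) ~ (u/K_ℓ)^{−1/ℓ}, i.e. the ratio of the two sides tends to 1. -/

import Mathlib

open Filter Topology Real MeasureTheory Asymptotics

noncomputable section

/-- Number of joint orbits of the subgroup generated by a tuple of permutations. -/
def kappa {ℓ n : ℕ} (σ : Fin ℓ → Equiv.Perm (Fin n)) : ℕ :=
  Nat.card (MulAction.orbitRel.Quotient (Subgroup.closure (Set.range σ)) (Fin n))

/-- `Acount ℓ n k` is the number of commuting `ℓ`-tuples of permutations of `{1,…,n}`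
with exactly `k` joint orbits. -/
def Acount (ℓ n k : ℕ) : ℕ :=
  Nat.card {σ : Fin ℓ → Equiv.Perm (Fin n) //
    (∀ i j, σ i * σ j = σ j * σ i) ∧ kappa σ = k}

/-- `Hpoly ℓ n x = (1/n!) ∑_k A(ℓ,n,k) x^k`. -/
def Hpoly (ℓ n : ℕ) (x : ℝ) : ℝ :=
  (1 / (n.factorial : ℝ)) * ∑ k ∈ Finset.range (n + 1), (Acount ℓ n k : ℝ) * x ^ k

/-- Expectation, under the Ewens-like measure `P_{ℓ,n,x}`, of `g(K_{ℓ,n})`. -/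
def expectK (ℓ n : ℕ) (x : ℝ) (g : ℕ → ℝ) : ℝ :=
  (∑ k ∈ Finset.range (n + 1), g k * (Acount ℓ n k : ℝ) * x ^ k) /
    (∑ k ∈ Finset.range (n + 1), (Acount ℓ n k : ℝ) * x ^ k)

/-- Mean of `K_{ℓ,n}` under `P_{ℓ,n,x}`. -/
def meanK (ℓ n : ℕ) (x : ℝ) : ℝ := expectK ℓ n x (fun k => (k : ℝ))

/-- Variance of `K_{ℓ,n}` under `P_{ℓ,n,x}`. -/
def varK (ℓ n : ℕ) (x : ℝ) : ℝ :=
  expectK ℓ n x (fun k => ((k : ℝ) - meanK ℓ n x) ^ 2)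

/-- Real Riemann zeta values (as a series), `zetaR s = ∑_{m ≥ 1} m^{-s}`. -/
def zetaR (s : ℝ) : ℝ := ∑' m : ℕ, 1 / ((m : ℝ) + 1) ^ s

/-- The constant `K_ℓ = (ℓ-1)! ζ(2)⋯ζ(ℓ)`. -/
def Kconst (ℓ : ℕ) : ℝ := ((ℓ - 1).factorial : ℝ) * ∏ j ∈ Finset.Icc 2 ℓ, zetaR (j : ℝ)

/-- The multiple series `Z^{[ℓ]}_{α_1,…,α_ℓ}(t)` with complex exponents. -/
def Zc (ℓ : ℕ) (α : Fin ℓ → ℂ) (t : ℝ) : ℂ :=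
  ∑' δ : Fin ℓ → ℕ+,
    (∏ i, ((δ i : ℕ) : ℂ) ^ (α i - 1)) *
      Complex.exp (-(((∏ i, ((δ i : ℕ) : ℝ)) * t : ℝ) : ℂ))

/-- The multiple series `Z^{[ℓ]}_{α_1,…,α_ℓ}(t)` with real exponents. -/
def Zr (ℓ : ℕ) (α : Fin ℓ → ℝ) (t : ℝ) : ℝ :=
  ∑' δ : Fin ℓ → ℕ+,
    (∏ i, ((δ i : ℕ) : ℝ) ^ (α i - 1)) *
      Real.exp (-(∏ i, ((δ i : ℕ) : ℝ)) * t)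

/-- The staircase series `Z_m^{[ℓ]}(t) = Z^{[ℓ]}_{m,m-1,…,m-ℓ+1}(t)`. -/
def Zstair (ℓ : ℕ) (m : ℤ) (t : ℝ) : ℝ :=
  Zr ℓ (fun i => (m : ℝ) - (i : ℕ)) t

/-- The inverse function `(Z_ℓ^{[ℓ]})^{-1} : (0,∞) → (0,∞)`. -/
def ZstairInv (ℓ : ℕ) (u : ℝ) : ℝ :=
  Function.invFunOn (Zstair ℓ ℓ) (Set.Ioi 0) u

/-- The function `q_{ℓ,n}(y,u,θ)` from the saddle point analysis. -/
def qfun (ℓ n : ℕ) (y u θ : ℝ) : ℂ :=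
  Complex.I * (n : ℂ) * (θ : ℂ) - (y : ℂ) * ∑' δ : Fin ℓ → ℕ+,
    (∏ i, ((δ i : ℕ) : ℂ) ^ ((ℓ : ℤ) - 2 - (i : ℕ))) *
      Complex.exp (-(((∏ i, ((δ i : ℕ) : ℝ)) * u : ℝ) : ℂ)) *
      (Complex.exp (Complex.I * (((∏ i, ((δ i : ℕ) : ℝ)) * θ : ℝ) : ℂ)) - 1)

/-- The normalizing sequence `b_n = ((x K_ℓ)^{1/(2ℓ)}/√(ℓ(ℓ-1))) n^{(ℓ-1)/(2ℓ)}`. -/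
def bseq (ℓ : ℕ) (x : ℝ) (n : ℕ) : ℝ :=
  (x * Kconst ℓ) ^ ((1 : ℝ) / (2 * (ℓ : ℝ))) / Real.sqrt ((ℓ : ℝ) * ((ℓ : ℝ) - 1)) *
    (n : ℝ) ^ (((ℓ : ℝ) - 1) / (2 * (ℓ : ℝ)))

/-- The sequence `x_n = x e^{s/b_n}`. -/
def xseq (ℓ : ℕ) (x s : ℝ) (n : ℕ) : ℝ := x * Real.exp (s / bseq ℓ x n)

/-- The saddle point sequence `t_n = (Z_ℓ^{[ℓ]})^{-1}(n/x)`. -/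
def tseq (ℓ : ℕ) (x : ℝ) (n : ℕ) : ℝ := ZstairInv ℓ ((n : ℝ) / x)

end

/-- one-variable sum -/
noncomputable def fser (k : ℕ) (s : ℝ) : ℝ := ∑' n : ℕ+, ((n : ℕ) : ℝ) ^ k * Real.exp (-((n : ℕ) : ℝ) * s)

lemma fser_aux (k : ℕ) {s : ℝ} (hs : 0 < s) (m : ℕ) :
    ((m + 1 : ℕ) : ℝ) ^ k * Real.exp (-((m + 1 : ℕ) : ℝ) * s) ≤
      ((k.factorial : ℝ) * Real.exp (-s)) * (((m + k).choose k : ℝ) * Real.exp (-s) ^ m) := by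
  have h1 : (((m + 1) ^ k : ℕ) : ℝ) ≤ ((k.factorial * (m + k).choose k : ℕ) : ℝ) := by
    rw [← Nat.ascFactorial_eq_factorial_mul_choose]
    exact_mod_cast Nat.pow_succ_le_ascFactorial (m + 1) k
  have h2 : Real.exp (-((m + 1 : ℕ) : ℝ) * s) = Real.exp (-s) * Real.exp (-s) ^ m := by
    rw [← Real.exp_nat_mul, ← Real.exp_add]; congr 1; push_cast; ring
  rw [h2]
  push_cast at h1 ⊢
  calc _ ≤ ((k.factorial : ℝ) * ((m + k).choose k : ℝ)) * (Real.exp (-s) * Real.exp (-s) ^ m) := by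
        gcongr
    _ = _ := by ring

lemma exp_norm_lt {s : ℝ} (hs : 0 < s) : ‖Real.exp (-s)‖ < 1 := by
  rw [Real.norm_eq_abs, abs_of_pos (Real.exp_pos _)]
  exact Real.exp_lt_one_iff.2 (by linarith)

lemma fser_summable_succ (k : ℕ) {s : ℝ} (hs : 0 < s) :
    Summable (fun m : ℕ => ((m + 1 : ℕ) : ℝ) ^ k * Real.exp (-((m + 1 : ℕ) : ℝ) * s)) :=
  Summable.of_nonneg_of_le (fun m => by positivity) (fser_aux k hs)
    ((summable_choose_mul_geometric_of_norm_lt_one k (exp_norm_lt hs)).mul_left _)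

lemma fser_summable (k : ℕ) {s : ℝ} (hs : 0 < s) :
    Summable (fun n : ℕ+ => ((n : ℕ) : ℝ) ^ k * Real.exp (-((n : ℕ) : ℝ) * s)) :=
  (summable_pnat_iff_summable_succ (f := fun n : ℕ => (n : ℝ) ^ k * Real.exp (-(n : ℝ) * s))).2
    (fser_summable_succ k hs)

lemma fser_eq (k : ℕ) (s : ℝ) :
    fser k s = ∑' m : ℕ, ((m + 1 : ℕ) : ℝ) ^ k * Real.exp (-((m + 1 : ℕ) : ℝ) * s) :=
  tsum_pnat_eq_tsum_succ (f := fun n : ℕ => (n : ℝ) ^ k * Real.exp (-(n : ℝ) * s))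

lemma fser_le (k : ℕ) {s : ℝ} (hs : 0 < s) :
    fser k s ≤ (k.factorial : ℝ) * Real.exp (-s) * (1 / (1 - Real.exp (-s)) ^ (k + 1)) := by
  rw [fser_eq, ← tsum_choose_mul_geometric_of_norm_lt_one k (exp_norm_lt hs), ← tsum_mul_left]
  exact (fser_summable_succ k hs).tsum_le_tsum (fser_aux k hs)
    ((summable_choose_mul_geometric_of_norm_lt_one k (exp_norm_lt hs)).mul_left _)

lemma le_fser (p : ℕ) {s : ℝ} (hs : 0 < s) :
    ((p + 1).factorial : ℝ) * Real.exp (-s) ^ (p + 1) * (1 / (1 - Real.exp (-s)) ^ (p + 1 + 1)) ≤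
      fser (p + 1) s := by
  rw [fser_eq, ← tsum_choose_mul_geometric_of_norm_lt_one (p + 1) (exp_norm_lt hs), ← tsum_mul_left]
  refine Summable.tsum_le_tsum_of_inj (fun m : ℕ => m + p) (add_left_injective p)
    (fun m _ => by positivity) (fun m => ?_)
    ((summable_choose_mul_geometric_of_norm_lt_one _ (exp_norm_lt hs)).mul_left _)
    (fser_summable_succ (p + 1) hs)
  have h1 : (((p + 1).factorial * (m + (p + 1)).choose (p + 1) : ℕ) : ℝ) ≤
      (((m + p + 1) ^ (p + 1) : ℕ) : ℝ) := by
    rw [← Nat.ascFactorial_eq_factorial_mul_choose]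
    exact_mod_cast Nat.ascFactorial_le_pow_add m (p + 1)
  have h2 : Real.exp (-((m + p + 1 : ℕ) : ℝ) * s) = Real.exp (-s) ^ (p + 1) * Real.exp (-s) ^ m := by
    rw [← Real.exp_nat_mul, ← Real.exp_nat_mul, ← Real.exp_add]; congr 1; push_cast; ring
  rw [h2]
  push_cast at h1 ⊢
  calc _ = (((p + 1).factorial : ℝ) * ((m + (p + 1)).choose (p + 1) : ℝ)) *
        (Real.exp (-s) ^ (p + 1) * Real.exp (-s) ^ m) := by ring
    _ ≤ _ := by gcongr

lemma fser_nonneg (k : ℕ) (s : ℝ) : 0 ≤ fser k s := tsum_nonneg fun n => by positivity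

lemma one_sub_exp_pos {s : ℝ} (hs : 0 < s) : 0 < 1 - Real.exp (-s) := by
  have := Real.exp_lt_one_iff.2 (show -s < 0 by linarith)
  linarith

lemma gser_bound (k : ℕ) {s : ℝ} (hs : 0 < s) :
    s ^ (k + 1) * fser k s ≤ (k.factorial : ℝ) * ((k + 1).factorial * Real.exp 1) := by
  have hp := one_sub_exp_pos hs
  have h1 : s ≤ (1 + s) * (1 - Real.exp (-s)) := by
    have : (1 + s) * Real.exp (-s) ≤ 1 := by
      rw [Real.exp_neg, ← div_eq_mul_inv, div_le_one (Real.exp_pos _)]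
      linarith [Real.add_one_le_exp s]
    nlinarith
  have h2 : s ^ (k + 1) * (1 / (1 - Real.exp (-s)) ^ (k + 1)) ≤ (1 + s) ^ (k + 1) := by
    rw [mul_one_div, div_le_iff₀ (by positivity), ← mul_pow]
    gcongr
  have h3 : (1 + s) ^ (k + 1) ≤ (k + 1).factorial * Real.exp (1 + s) := by
    have := Real.pow_div_factorial_le_exp (x := 1 + s) (by linarith) (k + 1)
    rw [div_le_iff₀ (by positivity)] at this
    linarith
  calc s ^ (k + 1) * fser k s
      ≤ s ^ (k + 1) * ((k.factorial : ℝ) * Real.exp (-s) * (1 / (1 - Real.exp (-s)) ^ (k + 1))) := by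
        gcongr; exact fser_le k hs
    _ = (k.factorial : ℝ) * (Real.exp (-s) * (s ^ (k + 1) * (1 / (1 - Real.exp (-s)) ^ (k + 1)))) := by
        ring
    _ ≤ (k.factorial : ℝ) * (Real.exp (-s) * ((k + 1).factorial * Real.exp (1 + s))) := by
        gcongr ?_ * (?_ * ?_); exact h2.trans h3
    _ = _ := by
        rw [Real.exp_add, Real.exp_neg]; field_simp

lemma tendsto_ratio : Tendsto (fun s : ℝ => s / (1 - Real.exp (-s))) (𝓝[>] 0) (𝓝 1) := by
  have h : HasDerivAt (fun s : ℝ => 1 - Real.exp (-s)) 1 0 := by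
    have := ((Real.hasDerivAt_exp (-0)).comp (0 : ℝ) (hasDerivAt_neg (0 : ℝ))).const_sub 1
    simpa using this
  have h2 := (hasDerivAt_iff_tendsto_slope.1 h).mono_left
    (nhdsWithin_mono (0 : ℝ) (fun x (hx : 0 < x) => ne_of_gt hx : Set.Ioi (0 : ℝ) ⊆ {0}ᶜ))
  have h3 := h2.inv₀ one_ne_zero
  simp only [inv_one] at h3
  refine h3.congr fun s => ?_
  simp [slope_def_field]

lemma gser_tendsto (k : ℕ) (hk : 1 ≤ k) :
    Tendsto (fun s : ℝ => s ^ (k + 1) * fser k s) (𝓝[>] 0) (𝓝 (k.factorial : ℝ)) := by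
  obtain ⟨p, rfl⟩ : ∃ p, k = p + 1 := ⟨k - 1, by omega⟩
  have he : Tendsto (fun s : ℝ => Real.exp (-s)) (𝓝[>] 0) (𝓝 1) := by
    have : Continuous (fun s : ℝ => Real.exp (-s)) := by fun_prop
    have := this.tendsto 0
    simp only [neg_zero, Real.exp_zero] at this
    exact this.mono_left nhdsWithin_le_nhds
  have hlo : Tendsto (fun s : ℝ => ((p + 1).factorial : ℝ) * Real.exp (-s) ^ (p + 1) *
      (s / (1 - Real.exp (-s))) ^ (p + 1 + 1)) (𝓝[>] 0) (𝓝 ((p + 1).factorial : ℝ)) := by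
    simpa using ((he.pow (p + 1)).const_mul ((p + 1).factorial : ℝ)).mul
      (tendsto_ratio.pow (p + 1 + 1))
  have hhi : Tendsto (fun s : ℝ => ((p + 1).factorial : ℝ) * Real.exp (-s) *
      (s / (1 - Real.exp (-s))) ^ (p + 1 + 1)) (𝓝[>] 0) (𝓝 ((p + 1).factorial : ℝ)) := by
    simpa using (he.const_mul ((p + 1).factorial : ℝ)).mul (tendsto_ratio.pow (p + 1 + 1))
  refine tendsto_of_tendsto_of_tendsto_of_le_of_le' hlo hhi ?_ ?_
  · filter_upwards [self_mem_nhdsWithin] with s (hs : 0 < s)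
    calc _ = s ^ (p + 1 + 1) * (((p + 1).factorial : ℝ) * Real.exp (-s) ^ (p + 1) *
          (1 / (1 - Real.exp (-s)) ^ (p + 1 + 1))) := by rw [div_pow]; ring
      _ ≤ _ := by gcongr; exact le_fser p hs
  · filter_upwards [self_mem_nhdsWithin] with s (hs : 0 < s)
    calc _ ≤ s ^ (p + 1 + 1) * (((p + 1).factorial : ℝ) * Real.exp (-s) *
          (1 / (1 - Real.exp (-s)) ^ (p + 1 + 1))) := by gcongr; exact fser_le (p + 1) hs
      _ = _ := by rw [div_pow]; ring

lemma hasSum_pi_prod : ∀ (k : ℕ) (a : Fin k → ℕ+ → ℝ), (∀ j n, 0 ≤ a j n) → (∀ j, Summable (a j)) →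
    HasSum (fun d : Fin k → ℕ+ => ∏ j, a j (d j)) (∏ j, ∑' n, a j n) := by
  intro k
  induction k with
  | zero => intro a _ _; simpa using hasSum_unique (fun d : Fin 0 → ℕ+ => ∏ j, a j (d j))
  | succ k ih =>
    intro a ha hs
    have h := ih (fun j => a j.succ) (fun j n => ha _ _) (fun j => hs _)
    rw [← (Fin.consEquiv (fun _ => ℕ+)).hasSum_iff, Fin.prod_univ_succ]
    have h2 := (hs 0).mul_of_nonneg h.summable (fun n => ha 0 n)
      (fun d => Finset.prod_nonneg fun j _ => ha _ _)
    have h3 := (hs 0).hasSum.mul h h2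
    have h4 : (fun d : Fin (k + 1) → ℕ+ => ∏ j, a j (d j)) ∘ (Fin.consEquiv (fun _ => ℕ+)) =
        fun x : ℕ+ × (Fin k → ℕ+) => a 0 x.1 * ∏ j, a j.succ (x.2 j) := by
      funext x
      simp [Fin.consEquiv, Fin.prod_univ_succ]
    exact h4 ▸ h3

/-- weights -/
noncomputable def wt (k : ℕ) (d : Fin k → ℕ+) : ℝ :=
  ∏ j : Fin k, 1 / ((d j : ℕ) : ℝ) ^ (((j : ℕ) + 2 : ℕ) : ℝ)

lemma zetaR_pnat (s : ℝ) : ∑' n : ℕ+, 1 / ((n : ℕ) : ℝ) ^ s = zetaR s := by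
  rw [tsum_pnat_eq_tsum_succ (f := fun n : ℕ => 1 / (n : ℝ) ^ s), zetaR]
  simp

lemma wt_hasSum (k : ℕ) : HasSum (wt k) (∏ j : Fin k, zetaR (((j : ℕ) + 2 : ℕ) : ℝ)) := by
  have := hasSum_pi_prod k (fun j n => 1 / ((n : ℕ) : ℝ) ^ (((j : ℕ) + 2 : ℕ) : ℝ))
    (fun j n => by positivity) (fun j => by
      refine (Real.summable_one_div_nat_rpow.2 ?_).comp_injective PNat.coe_injective
      push_cast; linarith [Nat.cast_nonneg (α := ℝ) (j : ℕ)])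
  simp only [zetaR_pnat] at this
  exact this

lemma wt_nonneg (k : ℕ) (d) : 0 ≤ wt k d := Finset.prod_nonneg fun j _ => by positivity

lemma Kconst_eq (k : ℕ) :
    Kconst (k + 1) = k.factorial * ∏ j : Fin k, zetaR (((j : ℕ) + 2 : ℕ) : ℝ) := by
  rw [Kconst, Fin.prod_univ_eq_prod_range (fun j : ℕ => zetaR ((j + 2 : ℕ) : ℝ)),
    Finset.range_eq_Ico, Finset.prod_Ico_add' (fun j : ℕ => zetaR (j : ℝ))]
  congr 2

lemma one_le_zetaR {s : ℝ} (hs : 1 < s) : 1 ≤ zetaR s := by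
  rw [← zetaR_pnat]
  have := (show Summable (fun n : ℕ+ => 1 / ((n : ℕ) : ℝ) ^ s) from
    (Real.summable_one_div_nat_rpow.2 hs).comp_injective PNat.coe_injective).le_tsum 1
    (fun n _ => by positivity)
  simpa using this

lemma Kconst_pos (ℓ : ℕ) : 0 < Kconst ℓ := by
  refine mul_pos (by positivity) (Finset.prod_pos fun j hj => ?_)
  have : 2 ≤ j := (Finset.mem_Icc.1 hj).1
  exact lt_of_lt_of_le one_pos (one_le_zetaR (by exact_mod_cast this))

/-- general term -/
noncomputable def term (ℓ : ℕ) (t : ℝ) (δ : Fin ℓ → ℕ+) : ℝ :=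
  (∏ i : Fin ℓ, ((δ i : ℕ) : ℝ) ^ ((((ℓ : ℤ) : ℝ) - ((i : ℕ) : ℝ)) - 1)) *
      Real.exp (-(∏ i, ((δ i : ℕ) : ℝ)) * t)

lemma Zstair_eq (ℓ : ℕ) (t : ℝ) : Zstair ℓ ℓ t = ∑' δ, term ℓ t δ := rfl

lemma term_nonneg (ℓ t δ) : 0 ≤ term ℓ t δ := by unfold term; positivity

/-- product of entries -/
noncomputable def pr (k : ℕ) (d : Fin k → ℕ+) : ℝ := ∏ j, ((d j : ℕ) : ℝ)

lemma pr_pos (k d) : 0 < pr k d := Finset.prod_pos fun j _ => by exact_mod_cast (d j).pos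

lemma term_cons (k : ℕ) (t : ℝ) (n : ℕ+) (d : Fin k → ℕ+) :
    term (k + 1) t (Fin.cons n d : Fin (k + 1) → ℕ+) =
      wt k d * pr k d ^ (k + 1) * (((n : ℕ) : ℝ) ^ k * Real.exp (-((n : ℕ) : ℝ) * (pr k d * t))) := by
  have h : wt k d * pr k d ^ (k + 1) =
      ∏ j : Fin k, ((d j : ℕ) : ℝ) ^ (((((k + 1 : ℕ) : ℤ) : ℝ) - ((j.succ : ℕ) : ℝ)) - 1) := by
    rw [wt, pr, ← Finset.prod_pow, ← Finset.prod_mul_distrib]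
    refine Finset.prod_congr rfl fun j _ => ?_
    have hd : (0 : ℝ) < ((d j : ℕ) : ℝ) := by exact_mod_cast (d j).pos
    rw [one_div, ← Real.rpow_neg hd.le, ← Real.rpow_natCast _ (k + 1), ← Real.rpow_add hd]
    congr 1
    push_cast [Fin.val_succ]; ring
  rw [h, term, Fin.prod_univ_succ, Fin.prod_univ_succ]
  simp only [Fin.cons_zero, Fin.cons_succ]
  have h0 : ((n : ℕ) : ℝ) ^ (((((k + 1 : ℕ) : ℤ) : ℝ) - (((0 : Fin (k + 1)) : ℕ) : ℝ)) - 1) =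
      ((n : ℕ) : ℝ) ^ k := by
    rw [← Real.rpow_natCast]; congr 1; simp
  rw [h0, pr, show -(((n : ℕ) : ℝ) * ∏ j, ((d j : ℕ) : ℝ)) * t =
    -((n : ℕ) : ℝ) * ((∏ j, ((d j : ℕ) : ℝ)) * t) by ring]
  ring

lemma stair_inner_sum (k : ℕ) {t : ℝ} (ht : 0 < t) (d : Fin k → ℕ+) :
    ∑' n : ℕ+, term (k + 1) t (Fin.cons n d : Fin (k + 1) → ℕ+) =
      (t ^ (k + 1))⁻¹ * (wt k d * ((pr k d * t) ^ (k + 1) * fser k (pr k d * t))) := by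
  simp only [term_cons]
  rw [tsum_mul_left, ← fser, mul_pow]
  field_simp

/-- reindexing -/
def swapE (k : ℕ) : (Fin k → ℕ+) × ℕ+ ≃ (Fin (k + 1) → ℕ+) :=
  (Equiv.prodComm _ _).trans (Fin.consEquiv (fun _ => ℕ+))

lemma swapE_apply (k d n) : swapE k (d, n) = (Fin.cons n d : Fin (k + 1) → ℕ+) := rfl

lemma term_summable' (k : ℕ) {t : ℝ} (ht : 0 < t) :
    Summable (fun x => term (k + 1) t (swapE k x)) := by
  refine (summable_prod_of_nonneg (fun x => term_nonneg _ _ _)).2 ⟨fun d => ?_, ?_⟩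
  · simp only [swapE_apply, term_cons]
    exact (fser_summable k (mul_pos (pr_pos k d) ht)).mul_left _
  · simp only [swapE_apply, stair_inner_sum k ht]
    refine Summable.mul_left _ (Summable.of_nonneg_of_le (fun d => ?_) (fun d => ?_)
      ((wt_hasSum k).summable.mul_right ((k.factorial : ℝ) * ((k + 1).factorial * Real.exp 1))))
    · have := pr_pos k d
      have := fser_nonneg k (pr k d * t)
      have := wt_nonneg k d
      positivity
    · exact mul_le_mul_of_nonneg_left (gser_bound k (mul_pos (pr_pos k d) ht)) (wt_nonneg k d)

lemma term_summable (k : ℕ) {t : ℝ} (ht : 0 < t) : Summable (term (k + 1) t) :=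
  (swapE k).summable_iff.1 (term_summable' k ht)

lemma Zstair_formula (k : ℕ) {t : ℝ} (ht : 0 < t) :
    t ^ (k + 1) * Zstair (k + 1) ((k + 1 : ℕ) : ℤ) t =
      ∑' d, wt k d * ((pr k d * t) ^ (k + 1) * fser k (pr k d * t)) := by
  rw [Zstair_eq, ← (swapE k).tsum_eq, (term_summable' k ht).tsum_prod]
  simp only [swapE_apply, stair_inner_sum k ht]
  rw [tsum_mul_left, mul_inv_cancel_left₀ (by positivity)]

lemma Zstair_tendsto (k : ℕ) (hk : 1 ≤ k) :
    Tendsto (fun t : ℝ => t ^ (k + 1) * Zstair (k + 1) ((k + 1 : ℕ) : ℤ) t) (𝓝[>] 0)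
      (𝓝 (Kconst (k + 1))) := by
  have hlim : Kconst (k + 1) = ∑' d, wt k d * (k.factorial : ℝ) := by
    rw [tsum_mul_right, (wt_hasSum k).tsum_eq, Kconst_eq, mul_comm]
  rw [hlim]
  have key : Tendsto (fun t : ℝ => ∑' d, wt k d * ((pr k d * t) ^ (k + 1) * fser k (pr k d * t)))
      (𝓝[>] 0) (𝓝 (∑' d, wt k d * (k.factorial : ℝ))) := by
    refine tendsto_tsum_of_dominated_convergence
      ((wt_hasSum k).summable.mul_right ((k.factorial : ℝ) * ((k + 1).factorial * Real.exp 1)))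
      (fun d => ?_) ?_
    · refine Tendsto.const_mul _ ((gser_tendsto k hk).comp ?_)
      refine tendsto_nhdsWithin_iff.2 ⟨?_, ?_⟩
      · have : Tendsto (fun t : ℝ => pr k d * t) (𝓝 0) (𝓝 (pr k d * 0)) :=
          (continuous_const.mul continuous_id).tendsto 0
        rw [mul_zero] at this
        exact this.mono_left nhdsWithin_le_nhds
      · filter_upwards [self_mem_nhdsWithin] with t (ht : 0 < t)
        exact mul_pos (pr_pos k d) ht
    · filter_upwards [self_mem_nhdsWithin] with t (ht : 0 < t) d
      have hp := mul_pos (pr_pos k d) ht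
      have := fser_nonneg k (pr k d * t)
      have := wt_nonneg k d
      rw [Real.norm_of_nonneg (by positivity)]
      exact mul_le_mul_of_nonneg_left (gser_bound k hp) (wt_nonneg k d)
  refine key.congr' ?_
  filter_upwards [self_mem_nhdsWithin] with t (ht : 0 < t)
  exact (Zstair_formula k ht).symm

lemma term_anti (ℓ : ℕ) {a b : ℝ} (h : a ≤ b) (δ) : term ℓ b δ ≤ term ℓ a δ := by
  unfold term
  have : (0 : ℝ) ≤ ∏ i, ((δ i : ℕ) : ℝ) := by positivity
  gcongr ?_ * Real.exp ?_
  nlinarith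

lemma Zstair_anti (k : ℕ) {a b : ℝ} (ha : 0 < a) (h : a ≤ b) :
    Zstair (k + 1) ((k + 1 : ℕ) : ℤ) b ≤ Zstair (k + 1) ((k + 1 : ℕ) : ℤ) a := by
  rw [Zstair_eq, Zstair_eq]
  exact (term_summable k (ha.trans_le h)).tsum_le_tsum (term_anti _ h) (term_summable k ha)

lemma Zstair_cont (k : ℕ) {a : ℝ} (ha : 0 < a) :
    ContinuousOn (Zstair (k + 1) ((k + 1 : ℕ) : ℤ)) (Set.Ici a) := by
  have : ContinuousOn (fun t => ∑' δ, term (k + 1) t δ) (Set.Ici a) := by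
    refine continuousOn_tsum (fun δ => ?_) (term_summable k ha) (fun δ t ht => ?_)
    · unfold term; fun_prop
    · rw [Real.norm_of_nonneg (term_nonneg _ _ _)]
      exact term_anti _ ht δ
  exact this

/-- `(Z_ℓ^{[ℓ]})^{-1}(u) ~ (u/K_ℓ)^{-1/ℓ}` as `u → ∞`. -/
theorem ZstairInv_asymptotic (ℓ : ℕ) (hℓ : 2 ≤ ℓ) :
    Tendsto (fun u : ℝ => ZstairInv ℓ u / (u / Kconst ℓ) ^ (-(1 : ℝ) / (ℓ : ℝ)))
      atTop (nhds 1) := by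
  obtain ⟨k, rfl⟩ : ∃ k, ℓ = k + 1 := ⟨ℓ - 1, by omega⟩
  have hk : 1 ≤ k := by omega
  have hK := Kconst_pos (k + 1)
  have hT := Zstair_tendsto k hk
  -- blow-up at zero
  have hinf : Tendsto (Zstair (k + 1) ((k + 1 : ℕ) : ℤ)) (𝓝[>] 0) atTop := by
    have h1 : Tendsto (fun t : ℝ => (t⁻¹) ^ (k + 1)) (𝓝[>] 0) atTop :=
      (tendsto_pow_atTop (by omega)).comp tendsto_inv_nhdsGT_zero
    refine (Tendsto.pos_mul_atTop hK hT h1).congr' ?_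
    filter_upwards [self_mem_nhdsWithin] with t (ht : 0 < t)
    rw [inv_pow]; field_simp
  have hinv : ∀ᶠ u : ℝ in atTop, 0 < ZstairInv (k + 1) u ∧
      Zstair (k + 1) ((k + 1 : ℕ) : ℤ) (ZstairInv (k + 1) u) = u := by
    filter_upwards [eventually_ge_atTop (Zstair (k + 1) ((k + 1 : ℕ) : ℤ) 1)] with u hu
    have hex : ∃ a ∈ Set.Ioi (0 : ℝ), Zstair (k + 1) ((k + 1 : ℕ) : ℤ) a = u := by
      obtain ⟨a, hau, ha0, ha1⟩ := ((hinf.eventually_ge_atTop u).and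
        (Ioo_mem_nhdsGT (show (0 : ℝ) < 1 by norm_num))).exists
      obtain ⟨c, hc, hcu⟩ := intermediate_value_Icc' ha1.le
        ((Zstair_cont k ha0).mono Set.Icc_subset_Ici_self) ⟨hu, hau⟩
      exact ⟨c, lt_of_lt_of_le ha0 hc.1, hcu⟩
    exact Function.invFunOn_pos hex
  have hto0 : Tendsto (ZstairInv (k + 1)) atTop (𝓝[>] 0) := by
    refine tendsto_nhdsWithin_iff.2 ⟨?_, hinv.mono fun u h => h.1⟩
    refine tendsto_order.2 ⟨fun a ha => hinv.mono fun u h => ha.trans h.1, fun a ha => ?_⟩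
    filter_upwards [hinv, eventually_gt_atTop (Zstair (k + 1) ((k + 1 : ℕ) : ℤ) a)] with u h hu
    by_contra! hcon
    have := Zstair_anti k ha hcon
    rw [h.2] at this
    linarith
  have hmain := hT.comp hto0
  have h2 : Tendsto (fun u : ℝ => (((ZstairInv (k + 1) u) ^ (k + 1) *
      Zstair (k + 1) ((k + 1 : ℕ) : ℤ) (ZstairInv (k + 1) u)) / Kconst (k + 1)) ^
        ((1 : ℝ) / ((k + 1 : ℕ) : ℝ))) atTop (𝓝 1) := by
    have := (hmain.div_const (Kconst (k + 1))).rpow_const (p := (1 : ℝ) / ((k + 1 : ℕ) : ℝ))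
      (Or.inl (by rw [div_self hK.ne']; exact one_ne_zero))
    rw [div_self hK.ne', Real.one_rpow] at this
    exact this
  refine h2.congr' ?_
  filter_upwards [hinv, eventually_gt_atTop (0 : ℝ)] with u h hu
  rw [h.2, mul_div_assoc, Real.mul_rpow (by have := h.1; positivity) (by positivity),
    one_div, Real.pow_rpow_inv_natCast h.1.le (by omega), neg_div, one_div,
    Real.rpow_neg (by positivity), div_inv_eq_mul]
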